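/- arXiv:math/0206145 — 6 statements merged into one kernel-verified Lean document; each statement's English description precedes it below -/
import Mathlib

section
/- For every integer u, the product u(u+1) is divisible by 16256 if and only if u is congruent to 0, 127, 16128, or 16255 modulo 16256 (here 16256 = 2⁷·127). -/
/-- `16256 = 2⁷·127` divides `u(u+1)` if and only if
`u ≡ 0, 127, 16128, 16255 (mod 16256)`. -/
theorem sixteen_thousand_dvd_u_mul_succ_iff (u : ℤ) :
    (16256 : ℤ) ∣ u * (u + 1) ↔
      u % 16256 = 0 ∨ u % 16256 = 127 ∨ u % 16256 = 16128 ∨ u % 16256 = 16255 := by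
  constructor
  · intro h
    have hp : Prime (127 : ℤ) := by
      have := Nat.prime_iff_prime_int.mp (show Nat.Prime 127 by norm_num)
      exact_mod_cast this
    have h2p : Prime (2 : ℤ) := Int.prime_two
    have h1 : (127 : ℤ) ∣ u ∨ (127 : ℤ) ∣ u + 1 :=
      hp.dvd_or_dvd (Dvd.dvd.trans (by norm_num) h)
    have h128 : (2 : ℤ) ^ 7 ∣ u * (u + 1) := Dvd.dvd.trans (by norm_num) h
    have h2 : (2 : ℤ) ^ 7 ∣ u ∨ (2 : ℤ) ^ 7 ∣ u + 1 := by
      by_cases hu : (2 : ℤ) ∣ u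
      · left
        exact h2p.pow_dvd_of_dvd_mul_right 7 (by omega) h128
      · right
        exact h2p.pow_dvd_of_dvd_mul_left 7 hu h128
    norm_num at h2
    omega
  · intro h
    have key : ∀ a b : ℤ, (127 : ℤ) ∣ a → (128 : ℤ) ∣ b → (16256 : ℤ) ∣ a * b := by
      intro a b ha hb
      have := mul_dvd_mul ha hb
      norm_num at this
      exact this
    rcases h with h | h | h | h
    · exact Dvd.dvd.mul_right (by omega) _
    · exact key _ _ (by omega) (by omega)
    · rw [mul_comm]
      exact key _ _ (by omega) (by omega)
    · exact Dvd.dvd.mul_left (by omega) _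
end

section
/- Let G be an additive abelian group. Suppose there exist: an injective homomorphism a : ℤ → G and a surjective homomorphism b : G → ℤ/2 with range a = ker b; an injective homomorphism c : ℤ → G and a surjective homomorphism d : G → ℤ/24 with range c = ker d; and suppose the composite d∘a : ℤ → ℤ/24 is surjective. Then G ≅ ℤ ⊕ ℤ/2; in particular the torsion subgroup of G is cyclic of order 2. -/
/-- If an abelian group `G` sits in a short exact sequence `0 → ℤ → G → ℤ/2 → 0` and in a
short exact sequence `0 → ℤ → G → ℤ/24 → 0` such that the composite `ℤ → G → ℤ/24` of the
first injection with the second surjection is onto, then `G ≅ ℤ ⊕ ℤ/2`. -/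
theorem abelian_group_ext_computation_pi4_BTOP (G : Type*) [AddCommGroup G]
    (a : ℤ →+ G) (ha : Function.Injective a)
    (b : G →+ ZMod 2) (hb : Function.Surjective b)
    (hab : a.range = b.ker)
    (c : ℤ →+ G) (hc : Function.Injective c)
    (d : G →+ ZMod 24) (hd : Function.Surjective d)
    (hcd : c.range = d.ker)
    (hda : Function.Surjective (d.comp a)) :
    Nonempty (G ≃+ ℤ × ZMod 2) := by
  have hba : ∀ n, b (a n) = 0 := fun n => by
    have h : a n ∈ b.ker := hab ▸ ⟨n, rfl⟩
    exact h
  have hker : ∀ x, b x = 0 → ∃ n, a n = x := fun x hx => by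
    have h : x ∈ a.range := hab ▸ hx
    exact h
  have hak : ∀ k : ℤ, a k = k • a 1 := fun k => by
    rw [← map_zsmul]; simp
  obtain ⟨g, hg⟩ := hb 1
  obtain ⟨n, hn⟩ := hker ((2 : ℤ) • g) (by rw [map_zsmul, hg]; decide)
  obtain ⟨t, ht2, hbt⟩ : ∃ t : G, (2 : ℤ) • t = 0 ∧ b t = 1 := by
    rcases Int.even_or_odd' n with ⟨m, hm | hm⟩
    · refine ⟨g - a m, ?_, by rw [map_sub, hg, hba, sub_zero]⟩
      rw [smul_sub, ← hn, ← map_zsmul, hm, smul_eq_mul, sub_self]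
    · exfalso
      have h1 : a 1 = (2 : ℤ) • (g - a m) := by
        rw [smul_sub, ← hn, ← map_zsmul, ← map_sub, hm, smul_eq_mul]
        congr 1; ring
      obtain ⟨k, hk⟩ := hda 1
      have h2 : (2 : ℤ) • (k • d (g - a m)) = 1 := by
        rw [← hk, AddMonoidHom.comp_apply, hak k, h1, map_zsmul, map_zsmul, smul_comm]
      have h3 : ∀ x : ZMod 24, (2 : ℤ) • x ≠ 1 := by decide
      exact h3 _ h2
  let l : ZMod 2 →+ G := ZMod.lift 2 ⟨zmultiplesHom G t, by simpa using ht2⟩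
  have hl : ∀ k : ℤ, l (k : ZMod 2) = k • t := fun k => by
    simp [l]
  have hbl : ∀ y, b (l y) = y := fun y => by
    obtain ⟨k, rfl⟩ := ZMod.intCast_surjective y
    rw [hl, map_zsmul, hbt]; simp
  refine ⟨(AddEquiv.ofBijective (a.coprod l) ⟨?_, ?_⟩).symm⟩
  · rw [injective_iff_map_eq_zero]
    rintro ⟨x, y⟩ h
    rw [AddMonoidHom.coprod_apply] at h
    have hy : y = 0 := by
      have := congrArg b h
      rwa [map_add, hba, hbl, zero_add, map_zero] at this
    subst hy
    rw [map_zero, add_zero] at h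
    have hx : x = 0 := ha (by rw [h, map_zero])
    rw [hx]; rfl
  · intro z
    obtain ⟨x, hx⟩ := hker (z - l (b z)) (by rw [map_sub, hbl, sub_self])
    exact ⟨(x, b z), by rw [AddMonoidHom.coprod_apply, hx, sub_add_cancel]⟩
end

section
/- Let G be an additive abelian group. Suppose there exist: an injective homomorphism a : ℤ → G and a surjective homomorphism b : G → ℤ/28 with range a = ker b; an injective homomorphism c : ℤ → G and a surjective homomorphism d : G → ℤ/240 with range c = ker d; and suppose the composite d∘a : ℤ → ℤ/240 is surjective. Then G ≅ ℤ ⊕ ℤ/4; in particular the torsion subgroup of G is cyclic of order 4. -/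
/-- If an abelian group `G` sits in a short exact sequence `0 → ℤ → G → ℤ/28 → 0` and in a
short exact sequence `0 → ℤ → G → ℤ/240 → 0` such that the composite `ℤ → G → ℤ/240` of the
first injection with the second surjection is onto, then `G ≅ ℤ ⊕ ℤ/4`. -/
theorem abelian_group_ext_computation_pi8_BTOP (G : Type*) [AddCommGroup G]
    (a : ℤ →+ G) (ha : Function.Injective a)
    (b : G →+ ZMod 28) (hb : Function.Surjective b)
    (hab : a.range = b.ker)
    (c : ℤ →+ G) (hc : Function.Injective c)
    (d : G →+ ZMod 240) (hd : Function.Surjective d)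
    (hcd : c.range = d.ker)
    (hda : Function.Surjective (d.comp a)) :
    Nonempty (G ≃+ ℤ × ZMod 4) := by
  have haz : ∀ n : ℤ, a n = n • a 1 := fun n => by rw [← map_zsmul]; simp
  have hcz : ∀ n : ℤ, c n = n • c 1 := fun n => by rw [← map_zsmul]; simp
  have hbA : b (a 1) = 0 := by
    have : a 1 ∈ b.ker := hab ▸ ⟨1, rfl⟩
    exact this
  have hdC : d (c 1) = 0 := by
    have : c 1 ∈ d.ker := hcd ▸ ⟨1, rfl⟩
    exact this
  have hkb : ∀ g, b g = 0 → ∃ n : ℤ, g = n • a 1 := fun g hg => by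
    have : g ∈ a.range := hab ▸ hg
    obtain ⟨n, rfl⟩ := this
    exact ⟨n, haz n⟩
  have hkd : ∀ g, d g = 0 → ∃ n : ℤ, g = n • c 1 := fun g hg => by
    have : g ∈ c.range := hcd ▸ hg
    obtain ⟨n, rfl⟩ := this
    exact ⟨n, hcz n⟩
  have hA0 : ∀ n : ℤ, n • a 1 = 0 → n = 0 := fun n hn => by
    apply ha; rw [haz, hn, map_zero]
  have hgen : ∀ g, ∃ x y : ℤ, g = x • a 1 + y • c 1 := fun g => by
    obtain ⟨x, hx⟩ := hda (d g)
    obtain ⟨y, hy⟩ := hkd (g - x • a 1) (by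
      rw [map_sub, ← haz, sub_eq_zero]; exact hx.symm)
    exact ⟨x, y, by rw [← hy]; abel⟩
  have hbC : ∀ y : ℤ, y • b (c 1) = 0 → ∃ z, y = 28 * z := fun y hy => by
    obtain ⟨g, hg⟩ := hb 1
    obtain ⟨u, v, rfl⟩ := hgen g
    rw [map_add, map_zsmul, map_zsmul, hbA, smul_zero, zero_add] at hg
    have h : (y : ZMod 28) = 0 := by
      calc (y : ZMod 28) = y • (v • b (c 1)) := by rw [hg]; simp
        _ = 0 := by rw [smul_comm, hy, smul_zero]
    exact (ZMod.intCast_zmod_eq_zero_iff_dvd y 28).1 h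
  have hdA : ∀ y : ℤ, y • d (a 1) = 0 → ∃ z, y = 240 * z := fun y hy => by
    obtain ⟨v, hg⟩ := hda 1
    rw [AddMonoidHom.comp_apply, haz, map_zsmul] at hg
    have h : (y : ZMod 240) = 0 := by
      calc (y : ZMod 240) = y • (v • d (a 1)) := by rw [hg]; simp
        _ = 0 := by rw [smul_comm, hy, smul_zero]
    exact (ZMod.intCast_zmod_eq_zero_iff_dvd y 240).1 h
  have h28 : ∀ t : ZMod 28, (28 : ℤ) • t = 0 := by decide
  have h240 : ∀ t : ZMod 240, (240 : ℤ) • t = 0 := fun t => by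
    rw [zsmul_eq_mul]
    have : ((240 : ℤ) : ZMod 240) = 0 := by decide
    rw [this, zero_mul]
  obtain ⟨n, hn⟩ := hkb ((28 : ℤ) • c 1) (by rw [map_zsmul, h28])
  obtain ⟨k, rfl⟩ := hdA n (by rw [← map_zsmul, ← hn, map_zsmul, hdC, smul_zero])
  obtain ⟨m, hm⟩ := hkd ((240 : ℤ) • a 1) (by rw [map_zsmul, h240])
  obtain ⟨l, rfl⟩ := hbC m (by rw [← map_zsmul, ← hm, map_zsmul, hbA, smul_zero])
  have hkl : k * l = 1 := by
    have h := hA0 (240 - 240 * k * l) (by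
      rw [sub_smul, hm, mul_comm (28 : ℤ) l, mul_smul, hn, ← mul_smul, ← sub_smul]
      ring_nf; simp)
    linarith
  have hkk : k * k = 1 := by
    rcases Int.isUnit_iff.1 (IsUnit.of_mul_eq_one l hkl) with h | h <;> rw [h] <;> rfl
  obtain ⟨C, hC⟩ : ∃ C, C = k • c 1 := ⟨_, rfl⟩
  have hC' : c 1 = k • C := by rw [hC, ← mul_smul, hkk, one_smul]
  have hrel : (28 : ℤ) • C = (240 : ℤ) • a 1 := by
    rw [hC, smul_comm, hn, ← mul_smul]
    congr 1
    linear_combination 240 * hkk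
  have hrel' : ∀ x y : ℤ, x • a 1 + y • C = 0 → ∃ z, y = 28 * z ∧ x = -240 * z := by
    intro x y h
    have h1 := congrArg b h
    rw [map_add, map_zsmul, hbA, smul_zero, zero_add, map_zsmul, map_zero, hC, map_zsmul,
      ← mul_smul] at h1
    obtain ⟨w, hw⟩ := hbC _ h1
    have hy : y = 28 * (w * k) := by linear_combination k * hw - y * hkk
    refine ⟨w * k, hy, ?_⟩
    have := hA0 (x + (w * k) * 240) (by
      rw [add_smul, mul_smul, ← hrel, ← mul_smul, ← h, hy, mul_comm (28 : ℤ)])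
    linarith
  obtain ⟨A, hA⟩ : ∃ A, A = a 1 := ⟨_, rfl⟩
  rw [← hA] at hrel hrel' hgen
  let T : G := (7 : ℤ) • C - (60 : ℤ) • A
  let F : G := (43 : ℤ) • A - (5 : ℤ) • C
  have hT : (4 : ℤ) • T = 0 := by
    have : (4 : ℤ) • T = (28 : ℤ) • C - (240 : ℤ) • A := by simp only [T]; module
    rw [this, hrel, sub_self]
  let φ : ℤ × ZMod 4 →+ G := AddMonoidHom.coprod (zmultiplesHom G F)
    (ZMod.lift 4 ⟨zmultiplesHom G T, by simpa using hT⟩)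
  have hφ : ∀ n t : ℤ, φ (n, (t : ZMod 4)) = n • F + t • T := fun n t => by
    simp [φ]
  refine ⟨(AddEquiv.ofBijective φ ⟨?_, ?_⟩).symm⟩
  · rw [injective_iff_map_eq_zero]
    rintro ⟨n, t⟩ h
    obtain ⟨t, rfl⟩ := ZMod.intCast_surjective t
    rw [hφ] at h
    obtain ⟨z, h1, h2⟩ := hrel' (43 * n - 60 * t) (7 * t - 5 * n) (by
      rw [← h]; simp only [F, T]; module)
    have hn0 : n = 0 := by omega
    have ht0 : t = 4 * z := by omega
    have : (t : ZMod 4) = 0 := (ZMod.intCast_zmod_eq_zero_iff_dvd t 4).2 ⟨z, ht0⟩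
    rw [hn0, this]; rfl
  · intro g
    obtain ⟨x, y, rfl⟩ := hgen g
    refine ⟨(7 * x + 60 * (y * k), ((5 * x + 43 * (y * k) : ℤ) : ZMod 4)), ?_⟩
    rw [hφ, hC']
    simp only [F, T]; module
end

section
/- Let G be an additive abelian group, i : ℤ → G an injective homomorphism, and p : G → ℤ × ℤ/2 a surjective homomorphism with range i = ker p (a short exact sequence 0 → ℤ → G → ℤ ⊕ ℤ/2 → 0). If i(1) ∉ 2G, then p admits a section, i.e. there is a homomorphism s : ℤ × ℤ/2 → G with p∘s = id. -/
/-- If `0 → ℤ → G → ℤ ⊕ ℤ/2 → 0` is a short exact sequence of abelian groups and the image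
of `1 ∈ ℤ` in `G` is not divisible by `2`, then the sequence splits: the surjection admits a
section. -/
theorem splitting_lemma_dim_four (G : Type*) [AddCommGroup G]
    (i : ℤ →+ G) (hi : Function.Injective i)
    (p : G →+ ℤ × ZMod 2) (hp : Function.Surjective p)
    (hip : i.range = p.ker)
    (h : ¬ ∃ g : G, i 1 = 2 • g) :
    ∃ s : ℤ × ZMod 2 →+ G, p.comp s = AddMonoidHom.id (ℤ × ZMod 2) := by
  obtain ⟨a, ha⟩ := hp (1, 0)
  obtain ⟨b, hb⟩ := hp (0, 1)
  have hpi : ∀ k, p (i k) = 0 := fun k => by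
    have : i k ∈ p.ker := hip ▸ ⟨k, rfl⟩
    exact this
  have hk : (2 : ℤ) • b ∈ p.ker := by
    rw [AddMonoidHom.mem_ker, map_zsmul, hb]
    ext
    · simp
    · exact (by decide : (2 : ℤ) • (1 : ZMod 2) = 0)
  rw [← hip] at hk
  obtain ⟨n, hn⟩ := hk
  obtain ⟨k, rfl | rfl⟩ := Int.even_or_odd' n
  · have h2 : (2 : ℤ) • (b - i k) = 0 := by
      rw [smul_sub, ← hn, ← map_zsmul, smul_eq_mul, sub_self]
    refine ⟨AddMonoidHom.coprod (zmultiplesHom G a)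
      (ZMod.lift 2 ⟨zmultiplesHom G (b - i k), by simpa using h2⟩), ?_⟩
    ext ⟨x, y⟩ : 1
    obtain ⟨y, rfl⟩ := ZMod.intCast_surjective y
    simp [ZMod.lift_coe, ha, hb, hpi]
  · exfalso
    apply h
    refine ⟨b - i k, ?_⟩
    have : i (2 * k + 1) = (2 : ℤ) • i k + i 1 := by
      rw [map_add, ← map_zsmul, smul_eq_mul]
    rw [this] at hn
    rw [← natCast_zsmul, smul_sub]
    exact eq_sub_of_add_eq' hn
end

section
/- Let G be an additive abelian group, i : ℤ → G an injective homomorphism, and p : G → ℤ × ℤ/4 a surjective homomorphism with range i = ker p (a short exact sequence 0 → ℤ → G → ℤ ⊕ ℤ/4 → 0). If the image of i(1) in the quotient G/4G has additive order 4 (equivalently, 2·i(1) ∉ 4G), then p admits a section, i.e. there is a homomorphism s : ℤ × ℤ/4 → G with p∘s = id. -/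
/-- If `0 → ℤ → G → ℤ ⊕ ℤ/4 → 0` is a short exact sequence of abelian groups and
`2·i(1) ∉ 4G` (i.e. the image of `i(1)` in `G/4G` has order `4`), then the sequence splits:
the surjection admits a section. -/
theorem splitting_lemma_dim_eight (G : Type*) [AddCommGroup G]
    (i : ℤ →+ G) (hi : Function.Injective i)
    (p : G →+ ℤ × ZMod 4) (hp : Function.Surjective p)
    (hip : i.range = p.ker)
    (h : ¬ ∃ g : G, 2 • i 1 = 4 • g) :
    ∃ s : ℤ × ZMod 4 →+ G, p.comp s = AddMonoidHom.id (ℤ × ZMod 4) := by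
  obtain ⟨a, ha⟩ := hp (1, 0)
  obtain ⟨b, hb⟩ := hp (0, 1)
  have hi1 : ∀ n : ℤ, i n = n • i 1 := fun n => by
    rw [← map_zsmul]; simp
  have hpi : ∀ n : ℤ, p (i n) = 0 := fun n => by
    have : i n ∈ p.ker := hip ▸ ⟨n, rfl⟩
    exact this
  have hk : (4 : ℤ) • b ∈ i.range := by
    rw [hip, AddMonoidHom.mem_ker, map_zsmul, hb]
    decide
  obtain ⟨k, hk⟩ := hk
  rw [hi1] at hk
  have h4 : ∃ m, k = 4 * m := by
    by_contra hcon
    apply h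
    rcases Int.even_or_odd' k with ⟨c, hc | hc⟩
    · rcases Int.even_or_odd' c with ⟨d, hd | hd⟩
      · exact absurd ⟨d, by omega⟩ hcon
      · refine ⟨b - d • i 1, ?_⟩
        have e : k = 4 * d + 2 := by omega
        subst e
        have e2 : (4:ℕ) • b = (4:ℤ) • b := by module
        rw [smul_sub, e2, ← hk]
        module
    · refine ⟨2 • b - c • i 1, ?_⟩
      subst hc
      have e2 : (4:ℕ) • (2:ℕ) • b = (2:ℤ) • (4:ℤ) • b := by module
      rw [smul_sub, e2, ← hk]
      module
  obtain ⟨m, rfl⟩ := h4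
  have hb4 : (4 : ℤ) • (b - i m) = 0 := by
    rw [smul_sub, ← hk, hi1 m]
    module
  refine ⟨(zmultiplesHom G a).coprod
    (ZMod.lift 4 ⟨zmultiplesHom G (b - i m), by simpa using hb4⟩), ?_⟩
  ext ⟨x, y⟩ : 1
  obtain ⟨y, rfl⟩ := ZMod.intCast_surjective y
  simp [ha, hb, hpi]
end

section
/- The subgroup of the additive group ℚ × ℚ generated by the two elements (2, 0) and (1, 6/7) consists exactly of the pairs (e, p) such that e ∈ ℤ, (7/6)·p ∈ ℤ, and the integer (7/3)·p + 2e is divisible by 4. -/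
/-- The subgroup of `ℚ × ℚ` generated by `(2, 0)` and `(1, 6/7)` consists exactly of the
pairs `(e, p)` with `e ∈ ℤ`, `(7/6)·p ∈ ℤ`, and the integer `(7/3)·p + 2e` divisible
by `4`. -/
theorem euler_pontrjagin_lattice_of_R8_bundles_over_S8 (e p : ℚ) :
    (e, p) ∈ AddSubgroup.closure ({((2 : ℚ), (0 : ℚ)), ((1 : ℚ), (6 / 7 : ℚ))} : Set (ℚ × ℚ)) ↔
      (∃ a : ℤ, e = (a : ℚ)) ∧ (∃ b : ℤ, (7 / 6) * p = (b : ℚ)) ∧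
        ∃ c : ℤ, (7 / 3) * p + 2 * e = 4 * (c : ℚ) := by
  rw [AddSubgroup.mem_closure_pair]
  simp only [Prod.smul_mk, Prod.mk_add_mk, Prod.mk.injEq, zsmul_eq_mul]
  constructor
  · rintro ⟨m, n, h1, h2⟩
    refine ⟨⟨2 * m + n, ?_⟩, ⟨n, ?_⟩, ⟨m + n, ?_⟩⟩
    · push_cast; linarith
    · linarith
    · push_cast; linarith
  · rintro ⟨-, ⟨b, hb⟩, ⟨c, hc⟩⟩
    refine ⟨c - b, b, ?_, ?_⟩
    · push_cast; linarith
    · linarith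
end
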